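/- arXiv:2212.07012 — 3 statements merged into one kernel-verified Lean document; each statement's English description precedes it below -/
import Mathlib

section
/- PSL₂(ℤ)-equivariance of p: for all integers a, b, c, d with ad − bc = 1 and all τ ∈ ℍ such that E2(τ) ≠ 0, E2((aτ + b)/(cτ + d)) ≠ 0, and c·p(τ) + d ≠ 0, one has p((aτ + b)/(cτ + d)) = (a·p(τ) + b)/(c·p(τ) + d). -/
/-!
Write `j(γ, w) = cw + d` and `κ = 6i/π`. The quasi-modularity
`E₂(γτ) = j(γ, τ)² E₂(τ) - κ c j(γ, τ)` of the weight-two Eisenstein series becomes multiplicative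
once `κ / E₂(τ)` is written as `τ - p(τ)`: it says `E₂(γτ) = j(γ, τ) j(γ, p(τ)) E₂(τ)`. On the other
hand `γu - γv = (u - v) / (j(γ, u) j(γ, v))` for every Möbius transformation of determinant one, and
with `u = τ`, `v = p(τ)` this turns `γτ - γp(τ)` into `κ / E₂(γτ) = γτ - p(γτ)`.
-/

/-- `q = exp(2πiτ)`. -/
noncomputable def qexp (τ : ℂ) : ℂ := Complex.exp (2 * Real.pi * Complex.I * τ)

/-- Divisor power sum `σ_k(n) = ∑_{d | n} d^k`, as a complex number. -/
noncomputable def sigmaC (k n : ℕ) : ℂ := ∑ d ∈ Nat.divisors n, (d : ℂ) ^ k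

/-- Eisenstein series `E₂`. -/
noncomputable def E2 (τ : ℂ) : ℂ := 1 - 24 * ∑' n : ℕ, sigmaC 1 (n + 1) * qexp τ ^ (n + 1)

/-- Eisenstein series `E₄`. -/
noncomputable def E4 (τ : ℂ) : ℂ := 1 + 240 * ∑' n : ℕ, sigmaC 3 (n + 1) * qexp τ ^ (n + 1)

/-- Eisenstein series `E₆`. -/
noncomputable def E6 (τ : ℂ) : ℂ := 1 - 504 * ∑' n : ℕ, sigmaC 5 (n + 1) * qexp τ ^ (n + 1)

/-- The discriminant form `Δ = (E₄³ - E₆²)/1728`. -/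
noncomputable def Δfun (τ : ℂ) : ℂ := (E4 τ ^ 3 - E6 τ ^ 2) / 1728

/-- The ratio of quasi-periods `p(τ) = τ - 6i/(π E₂(τ))`. -/
noncomputable def pfun (τ : ℂ) : ℂ := τ - 6 * Complex.I / (Real.pi * E2 τ)

open UpperHalfPlane MatrixGroups

theorem num_specialLinearGroup_apply (γ : SL(2, ℤ)) (w : ℂ) :
    num γ w = γ 0 0 * w + γ 0 1 := by
  simp [num]

theorem denom_specialLinearGroup_apply (γ : SL(2, ℤ)) (w : ℂ) :
    denom γ w = γ 1 0 * w + γ 1 1 := by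
  simp [denom]

theorem coe_smul_eq_num_div_denom (γ : SL(2, ℤ)) (z : ℍ) :
    (↑(γ • z) : ℂ) = num γ z / denom γ z :=
  coe_smul_of_det_pos (by simp) z

theorem num_div_denom_sub_num_div_denom (g : GL (Fin 2) ℝ) {u v : ℂ}
    (hu : denom g u ≠ 0) (hv : denom g v ≠ 0) :
    num g u / denom g u - num g v / denom g v
      = g.det.val * (u - v) / (denom g u * denom g v) := by
  rw [div_sub_div _ _ hu hv, Matrix.GeneralLinearGroup.val_det_apply, Matrix.det_fin_two]
  simp only [num, denom, Complex.ofReal_sub, Complex.ofReal_mul]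
  ring

theorem E2_coe_eq_eisensteinSeriesE2 (z : ℍ) : E2 z = EisensteinSeries.E2 z := by
  rw [EisensteinSeries.E2_eq_tsum_cexp,
    tsum_pnat_eq_tsum_succ (f := fun n ↦
      (ArithmeticFunction.sigma 1 n : ℂ) * Complex.exp (2 * Real.pi * Complex.I * z) ^ n)]
  simp [E2, sigmaC, qexp, ArithmeticFunction.sigma_apply]

theorem E2_smul (γ : SL(2, ℤ)) (z : ℍ) :
    E2 ↑(γ • z)
      = denom γ z ^ 2 * E2 z - 6 * Complex.I / Real.pi * γ 1 0 * denom γ z := by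
  have hj : denom γ z ≠ 0 := denom_ne_zero γ z
  have hslash := congrFun (EisensteinSeries.E2_slash_action γ) z
  simp only [ModularForm.SL_slash_apply, Pi.sub_apply, Pi.smul_apply, smul_eq_mul,
    EisensteinSeries.D2, riemannZeta_two, zpow_neg, ← E2_coe_eq_eisensteinSeriesE2] at hslash
  rw [← div_eq_mul_inv, div_eq_iff (zpow_ne_zero 2 hj)] at hslash
  rw [hslash]
  field_simp

theorem sub_pfun (τ : ℂ) : τ - pfun τ = 6 * Complex.I / Real.pi / E2 τ := by
  rw [pfun, sub_sub_cancel, div_div]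

theorem E2_smul_eq_denom_mul_denom_pfun_mul (γ : SL(2, ℤ)) {z : ℍ} (hE : E2 z ≠ 0) :
    E2 ↑(γ • z) = denom γ z * denom γ (pfun z) * E2 z := by
  have hκ : (z - pfun z) * E2 z = 6 * Complex.I / Real.pi := by
    rw [sub_pfun, div_mul_cancel₀ _ hE]
  have hsub : denom γ z - denom γ (pfun z) = γ 1 0 * (z - pfun z) := by
    rw [denom_specialLinearGroup_apply, denom_specialLinearGroup_apply]
    ring
  rw [E2_smul, ← hκ]
  linear_combination denom γ z * E2 z * hsub

theorem pfun_smul (γ : SL(2, ℤ)) {z : ℍ} (hE : E2 z ≠ 0) (hden : denom γ (pfun z) ≠ 0) :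
    pfun ↑(γ • z) = num γ (pfun z) / denom γ (pfun z) := by
  have hsub : (↑(γ • z) : ℂ) - pfun ↑(γ • z) = ↑(γ • z) - num γ (pfun z) / denom γ (pfun z) :=
    calc (↑(γ • z) : ℂ) - pfun ↑(γ • z)
        = 6 * Complex.I / Real.pi / (denom γ z * denom γ (pfun z) * E2 z) := by
          rw [sub_pfun, E2_smul_eq_denom_mul_denom_pfun_mul γ hE]
      _ = (z - pfun z) / (denom γ z * denom γ (pfun z)) := by
          rw [sub_pfun, div_div _ (E2 z), mul_comm (E2 z)]
      _ = ↑(γ • z) - num γ (pfun z) / denom γ (pfun z) := by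
          rw [coe_smul_eq_num_div_denom, num_div_denom_sub_num_div_denom _ (denom_ne_zero γ z) hden]
          simp
  exact sub_right_injective hsub

/-- `PSL₂(ℤ)`-equivariance of `p`: `p(Sτ) = S(p(τ))` for `S` in the modular group. -/
theorem p_modular_equivariance (a b c d : ℤ) (h : a * d - b * c = 1)
    (τ : ℂ) (hτ : 0 < τ.im) (hE : E2 τ ≠ 0)
    (hE' : E2 (((a : ℂ) * τ + b) / ((c : ℂ) * τ + d)) ≠ 0)
    (hden : (c : ℂ) * pfun τ + d ≠ 0) :
    pfun (((a : ℂ) * τ + b) / ((c : ℂ) * τ + d))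
      = ((a : ℂ) * pfun τ + b) / ((c : ℂ) * pfun τ + d) := by
  let γ : SL(2, ℤ) := ⟨!![a, b; c, d], by rwa [Matrix.det_fin_two_of]⟩
  let z : ℍ := ⟨τ, hτ⟩
  have hnum (w : ℂ) : num γ w = a * w + b := num_specialLinearGroup_apply γ w
  have hdenom (w : ℂ) : denom γ w = c * w + d := denom_specialLinearGroup_apply γ w
  have hγz : (↑(γ • z) : ℂ) = (a * τ + b) / (c * τ + d) := by
    rw [coe_smul_eq_num_div_denom, hnum, hdenom]
  have hp : pfun ↑(γ • z) = num γ (pfun τ) / denom γ (pfun τ) :=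
    pfun_smul γ hE (by rwa [hdenom])
  rwa [hγz, hnum, hdenom] at hp
end

section
/- E4 vanishes at ρ := (1 + i√3)/2, i.e. E4((1 + i√3)/2) = 0. -/
section FixedPoints

open UpperHalfPlane ModularGroup
open scoped MatrixGroups

theorem slashInvariantForm_apply_eq_zero_of_smul_eq_self {Γ : Subgroup (GL (Fin 2) ℝ)}
    [Γ.HasDetOne] {k : ℤ} {F : Type*} [FunLike F ℍ ℂ] [SlashInvariantFormClass F Γ k] (f : F)
    {γ : GL (Fin 2) ℝ} (hγ : γ ∈ Γ) {z : ℍ} (hz : γ • z = z) (hdenom : denom γ z ^ k ≠ 1) :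
    f z = 0 := by
  have hmod : f z = denom γ z ^ k * f z := by
    simpa only [hz] using SlashInvariantForm.slash_action_eqn'' f hγ z
  by_contra hne
  exact hdenom ((right_eq_mul₀ hne).mp hmod)

theorem denom_S_mul_T (z : ℍ) : denom (S * T : SL(2, ℤ)) z = z + 1 := by
  rw [denom_apply]
  simp [Matrix.SpecialLinearGroup.coe_mul, coe_S, coe_T]

theorem isPrimitiveRoot_ρ_add_one : IsPrimitiveRoot (ρ + 1 : ℂ) 6 := by
  rw [← Polynomial.isRoot_cyclotomic_iff, Polynomial.cyclotomic_six]
  simp only [Polynomial.IsRoot.def, Polynomial.eval_add, Polynomial.eval_sub,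
    Polynomial.eval_pow, Polynomial.eval_X, Polynomial.eval_one]
  linear_combination ρ_sq

theorem levelOne_apply_ρ_eq_zero {k : ℤ} (hk : ¬ 6 ∣ k) {F : Type*} [FunLike F ℍ ℂ]
    [SlashInvariantFormClass F 𝒮ℒ k] (f : F) : f ρ = 0 := by
  have hfix : (S * T) • ρ = ρ := stabilizer_ρ.mpr (by simp)
  refine slashInvariantForm_apply_eq_zero_of_smul_eq_self f
    (MonoidHom.mem_range.mpr ⟨S * T, rfl⟩) hfix ?_
  have hpow : (ρ + 1 : ℂ) ^ k ≠ 1 := mt (isPrimitiveRoot_ρ_add_one.zpow_eq_one_iff_dvd k).mp hk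
  rwa [← denom_S_mul_T] at hpow

theorem coe_one_vadd_ρ : (((1 : ℝ) +ᵥ ρ : ℍ) : ℂ) = (1 + Complex.I * Real.sqrt 3) / 2 := by
  apply Complex.ext <;> norm_num [ρ]

end FixedPoints

section QExpansions

open UpperHalfPlane

theorem sigmaC_eq_sigma (k n : ℕ) : sigmaC k n = ArithmeticFunction.sigma k n := by
  simp [sigmaC, ArithmeticFunction.sigma_apply]

theorem eisenstein_eq_one_sub_tsum_sigmaC_mul_qexp_pow {k : ℕ} (hk : 3 ≤ k) (hk_even : Even k)
    (z : ℍ) :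
    ModularForm.E hk z =
      1 - 2 * k / bernoulli k * ∑' n : ℕ, sigmaC (k - 1) (n + 1) * qexp z ^ (n + 1) := by
  rw [EisensteinSeries.q_expansion_bernoulli hk hk_even,
    ← tsum_pnat_eq_tsum_succ (f := fun n : ℕ ↦ sigmaC (k - 1) n * qexp z ^ n)]
  simp only [sigmaC_eq_sigma, qexp, zpow_natCast]

theorem E4_eq_modularForm_E₄ (z : ℍ) : E4 z = ModularForm.E₄ z := by
  have bernoulli_four : bernoulli 4 = -1 / 30 := by
    rw [bernoulli_eq_bernoulli'_of_ne_one (by norm_num), bernoulli'_four]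
  rw [eisenstein_eq_one_sub_tsum_sigmaC_mul_qexp_pow _ (by decide), bernoulli_four, E4]
  norm_num

end QExpansions

/-- `E₄` vanishes at `ρ = (1 + i√3)/2`. -/
theorem E4_vanishes_at_rho : E4 ((1 + Complex.I * Real.sqrt 3) / 2) = 0 := by
  rw [← coe_one_vadd_ρ, E4_eq_modularForm_E₄,
    SlashInvariantForm.vAdd_apply_of_mem_strictPeriods _ _ one_mem_strictPeriods_SL]
  exact levelOne_apply_ρ_eq_zero (by norm_num) ModularForm.E₄
end

section
/- For every τ ∈ ℍ with E4(τ)³ ≠ E6(τ)², the complex derivative of J satisfies (1/(2πi)) · J'(τ) = −(1/1728) · E4(τ)² · E6(τ)/Δ(τ). -/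
/-- The `J`-invariant `J = E₄³/(E₄³ - E₆²)`. -/
noncomputable def Jinv (τ : ℂ) : ℂ := E4 τ ^ 3 / (E4 τ ^ 3 - E6 τ ^ 2)

open UpperHalfPlane ModularForm Derivative Filter Topology Function
open scoped MatrixGroups Manifold

section Derivative

variable {f : ℍ → ℂ}

lemma hasDerivAt_of_forall_coe_eq (hf : MDiff f) {F : ℂ → ℂ} (hF : ∀ z : ℍ, F z = f z) (z : ℍ) :
    HasDerivAt F (2 * Real.pi * Complex.I * D f z) z := by
  rw [normalizedDerivOfComplex, mul_inv_cancel_left₀ Complex.two_pi_I_ne_zero]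
  refine (mdifferentiableAt_iff.mp (hf z)).hasDerivAt.congr_of_eventuallyEq ?_
  filter_upwards [isOpen_upperHalfPlaneSet.mem_nhds z.im_pos] with w hw
  simpa [ofComplex_apply_of_im_pos hw] using hF ⟨w, hw⟩

/-- Cauchy's estimate on the disc of radius `Im z / 2` about `z`. -/
lemma norm_normalizedDerivOfComplex_le (hf : MDiff f) {A M : ℝ}
    (hM : ∀ z : ℍ, A ≤ z.im → ‖f z‖ ≤ M) {z : ℍ} (hz : 2 * A ≤ z.im) :
    ‖D f z‖ ≤ M / (Real.pi * z.im) := by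
  have hr : 0 < z.im / 2 := half_pos z.im_pos
  have him {w : ℂ} (hw : w ∈ Metric.closedBall (z : ℂ) (z.im / 2)) : z.im / 2 ≤ w.im := by
    have := (Complex.abs_im_le_norm (w - z)).trans (mem_closedBall_iff_norm.mp hw)
    rw [Complex.sub_im, coe_im] at this
    linarith [neg_abs_le (w.im - z.im)]
  have hd : DifferentiableOn ℂ (f ∘ ofComplex) (Metric.closedBall z (z.im / 2)) :=
    (UpperHalfPlane.mdifferentiable_iff.mp hf).mono fun w hw ↦ hr.trans_le (him hw)
  have hderiv : ‖deriv (f ∘ ofComplex) z‖ ≤ M / (z.im / 2) := by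
    refine Complex.norm_deriv_le_of_forall_mem_sphere_norm_le hr
      (hd.diffContOnCl_ball subset_rfl) fun w hw ↦ ?_
    have hw' : z.im / 2 ≤ w.im := him (Metric.sphere_subset_closedBall hw)
    rw [comp_apply, ofComplex_apply_of_im_pos (hr.trans_le hw')]
    exact hM _ ((le_div_iff₀' two_pos).mpr hz |>.trans hw')
  calc ‖D f z‖ = (2 * Real.pi)⁻¹ * ‖deriv (f ∘ ofComplex) z‖ := by
        simp [normalizedDerivOfComplex, abs_of_pos Real.pi_pos]
    _ ≤ (2 * Real.pi)⁻¹ * (M / (z.im / 2)) := by gcongr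
    _ = M / (Real.pi * z.im) := by field_simp

lemma isZeroAtImInfty_normalizedDerivOfComplex (hf : MDiff f) (hb : IsBoundedAtImInfty f) :
    IsZeroAtImInfty (D f) := by
  obtain ⟨M, A, hM⟩ := isBoundedAtImInfty_iff.mp hb
  have him : Tendsto UpperHalfPlane.im atImInfty atTop := tendsto_comap
  refine squeeze_zero_norm' ?_ ((him.const_mul_atTop Real.pi_pos).const_div_atTop M)
  filter_upwards [him.eventually_ge_atTop (2 * A)] with z hz
  exact norm_normalizedDerivOfComplex_le hf hM hz

end Derivative

section QExpansion

variable {f : ℍ → ℂ} {h : ℝ}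

lemma periodic_normalizedDerivOfComplex (hper : Periodic (f ∘ ofComplex) h) :
    Periodic (D f ∘ ofComplex) h := by
  intro w
  by_cases! hw : 0 < w.im
  · have hw' : 0 < (w + h).im := by simpa using hw
    simp only [comp_apply, normalizedDerivOfComplex, ofComplex_apply_of_im_pos hw,
      ofComplex_apply_of_im_pos hw', ← deriv_comp_add_const]
    congr 2
    exact funext hper
  · have hw' : (w + h).im ≤ 0 := by simpa using hw
    simp [ofComplex_apply_of_im_nonpos hw, ofComplex_apply_of_im_nonpos hw']

lemma analyticAt_cuspFunction_normalizedDerivOfComplex (hh : 0 < h)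
    (hper : Periodic (f ∘ ofComplex) h) (hf : MDiff f) (hb : IsBoundedAtImInfty f) :
    AnalyticAt ℂ (cuspFunction h (D f)) 0 :=
  analyticAt_cuspFunction_zero hh (periodic_normalizedDerivOfComplex hper)
    (normalizedDerivOfComplex_mdifferentiable hf)
    (isZeroAtImInfty_normalizedDerivOfComplex hf hb).isBoundedAtImInfty

lemma normalizedDerivOfComplex_eq_qParam_mul_deriv (hh : 0 < h)
    (hper : Periodic (f ∘ ofComplex) h) (hf : MDiff f) (hb : IsBoundedAtImInfty f) (z : ℍ) :
    D f z = Periodic.qParam h z / h * deriv (cuspFunction h f) (Periodic.qParam h z) := by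
  have hF : HasDerivAt (cuspFunction h f) (deriv (cuspFunction h f) (Periodic.qParam h z))
      (Periodic.qParam h z) := (differentiableAt_cuspFunction hh hper hf hb
    (Periodic.norm_qParam_lt_one hh z.im_pos)).hasDerivAt
  have hq : HasDerivAt (Periodic.qParam h) (Periodic.qParam h z * (2 * Real.pi * Complex.I / h))
      z := by
    simpa [Periodic.qParam] using!
      (((hasDerivAt_id (z : ℂ)).const_mul (2 * Real.pi * Complex.I)).div_const (h : ℂ)).cexp
  have hcomp : f ∘ ofComplex = cuspFunction h f ∘ Periodic.qParam h :=
    funext fun w ↦ (Periodic.eq_cuspFunction hh.ne' hper w).symm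
  rw [normalizedDerivOfComplex, hcomp, (hF.comp (z : ℂ) hq).deriv]
  field_simp

lemma hasSum_normalizedDerivOfComplex (hh : 0 < h)
    (hper : Periodic (f ∘ ofComplex) h) (hf : MDiff f) (hb : IsBoundedAtImInfty f) (z : ℍ) :
    HasSum (fun n : ℕ ↦ (n / h * (qExpansion h f).coeff n : ℂ) • Periodic.qParam h z ^ n)
      (D f z) := by
  have hq : Periodic.qParam h z ∈ Metric.ball 0 1 := by
    simpa using Periodic.norm_qParam_lt_one hh z.im_pos
  have hdiff : DifferentiableOn ℂ (deriv (cuspFunction h f)) (Metric.ball 0 1) :=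
    (differentiableOn_cuspFunction_ball hh hper hf hb).deriv Metric.isOpen_ball
  have hsum := (Complex.hasSum_taylorSeries_on_ball hdiff hq).mul_left
    (Periodic.qParam h z / h : ℂ)
  rw [← normalizedDerivOfComplex_eq_qParam_mul_deriv hh hper hf hb] at hsum
  rw [← hasSum_nat_add_iff' 1]
  convert! hsum using 1
  · ext n
    rw [qExpansion_coeff, iteratedDeriv_succ', Nat.factorial_succ, pow_succ']
    push_cast
    simp only [smul_eq_mul, sub_zero]
    field_simp
  · simp

lemma qExpansion_normalizedDerivOfComplex_coeff (hh : 0 < h)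
    (hper : Periodic (f ∘ ofComplex) h) (hf : MDiff f) (hb : IsBoundedAtImInfty f) (n : ℕ) :
    (qExpansion h (D f)).coeff n = n / h * (qExpansion h f).coeff n := by
  have han := analyticAt_cuspFunction_normalizedDerivOfComplex hh hper hf hb
  have hD := (hasFPowerSeriesOnBall_cuspFunction hh han
    (hasSum_normalizedDerivOfComplex hh hper hf hb)).hasFPowerSeriesAt
  have hcoeff := congr_arg (FormalMultilinearSeries.coeff · n)
    (hD.eq_formalMultilinearSeries han.hasFPowerSeriesAt)
  rw [qExpansion_coeff, ← div_eq_inv_mul]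
  simpa only [FormalMultilinearSeries.coeff_ofScalars] using hcoeff.symm

end QExpansion

section RankinCohen

/-- The first Rankin–Cohen bracket `k f · D g - l g · D f` of functions of weights `k` and `l`,
with `D = (2πi)⁻¹ d/dτ`; it is modular of weight `k + l + 2` when `f` and `g` are modular. -/
noncomputable def rankinCohenBracket (k l : ℤ) (f g : ℍ → ℂ) : ℍ → ℂ :=
  (k : ℂ) • (f * D g) - (l : ℂ) • (g * D f)

variable {k l : ℤ} {f g : ℍ → ℂ}

lemma mdifferentiable_rankinCohenBracket (hf : MDiff f) (hg : MDiff g) :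
    MDiff (rankinCohenBracket k l f g) :=
  ((hf.mul (normalizedDerivOfComplex_mdifferentiable hg)).const_smul _).sub
    ((hg.mul (normalizedDerivOfComplex_mdifferentiable hf)).const_smul _)

lemma isZeroAtImInfty_rankinCohenBracket (hf : MDiff f) (hg : MDiff g)
    (hfb : IsBoundedAtImInfty f) (hgb : IsBoundedAtImInfty g) :
    IsZeroAtImInfty (rankinCohenBracket k l f g) := by
  have hfDg : IsZeroAtImInfty (f * D g) :=
    hfb.mul_zeroAtFilter (isZeroAtImInfty_normalizedDerivOfComplex hg hgb)
  have hgDf : IsZeroAtImInfty (g * D f) :=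
    hgb.mul_zeroAtFilter (isZeroAtImInfty_normalizedDerivOfComplex hf hfb)
  rw [rankinCohenBracket, sub_eq_add_neg]
  exact (hfDg.smul _).add (hgDf.smul _).neg

/-- The multiples of `f · g` by which `D` fails to commute with the slash action cancel. -/
lemma rankinCohenBracket_slash (hf : MDiff f) (hg : MDiff g) {γ : GL (Fin 2) ℝ}
    (hγ : 0 < γ.val.det) :
    rankinCohenBracket k l f g ∣[k + l + 2] γ =
      ((γ.val.det : ℂ) ^ 2) • rankinCohenBracket k l (f ∣[k] γ) (g ∣[l] γ) := by
  have hdet : (γ.val.det : ℂ) ≠ 0 := Complex.ofReal_ne_zero.mpr hγ.ne'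
  have hσ (c : ℂ) : σ γ c = c := by simp [σ, hγ]
  have hmul {m n : ℤ} (hmn : k + l + 2 = m + n) (u v : ℍ → ℂ) :
      (u * v) ∣[k + l + 2] γ = γ.val.det • (u ∣[m] γ * v ∣[n] γ) := by
    rw [hmn, mul_slash, Matrix.GeneralLinearGroup.val_det_apply, abs_of_pos hγ]
  rw [rankinCohenBracket, sub_eq_add_neg, SlashAction.add_slash, SlashAction.neg_slash,
    smul_slash, smul_slash, hσ, hσ, hmul (add_assoc k l 2), hmul (by ring : _ = l + (k + 2)),
    rankinCohenBracket, normalizedDerivOfComplex_slash hf hγ, normalizedDerivOfComplex_slash hg hγ]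
  ext z
  simp only [Pi.add_apply, Pi.sub_apply, Pi.neg_apply, Pi.smul_apply, Pi.mul_apply, smul_eq_mul,
    Complex.real_smul]
  field_simp
  ring

lemma qExpansion_rankinCohenBracket_coeff_one {h : ℝ} (hh : 0 < h)
    (hf : MDiff f) (hg : MDiff g)
    (hfper : Periodic (f ∘ ofComplex) h) (hgper : Periodic (g ∘ ofComplex) h)
    (hfb : IsBoundedAtImInfty f) (hgb : IsBoundedAtImInfty g) :
    (qExpansion h (rankinCohenBracket k l f g)).coeff 1 =
      (k * (qExpansion h f).coeff 0 * (qExpansion h g).coeff 1 -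
        l * (qExpansion h g).coeff 0 * (qExpansion h f).coeff 1) / h := by
  have hfa := analyticAt_cuspFunction_zero hh hfper hf hfb
  have hga := analyticAt_cuspFunction_zero hh hgper hg hgb
  have hDf := analyticAt_cuspFunction_normalizedDerivOfComplex hh hfper hf hfb
  have hDg := analyticAt_cuspFunction_normalizedDerivOfComplex hh hgper hg hgb
  have hfDg : AnalyticAt ℂ (cuspFunction h (f * D g)) 0 := by
    rw [cuspFunction_mul hfa.continuousAt hDg.continuousAt]
    exact hfa.mul hDg
  have hgDf : AnalyticAt ℂ (cuspFunction h (g * D f)) 0 := by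
    rw [cuspFunction_mul hga.continuousAt hDf.continuousAt]
    exact hga.mul hDf
  have hfDg' : AnalyticAt ℂ (cuspFunction h ((k : ℂ) • (f * D g))) 0 := by
    rw [cuspFunction_smul hfDg.continuousAt]
    exact hfDg.const_smul
  have hgDf' : AnalyticAt ℂ (cuspFunction h ((l : ℂ) • (g * D f))) 0 := by
    rw [cuspFunction_smul hgDf.continuousAt]
    exact hgDf.const_smul
  rw [rankinCohenBracket, qExpansion_sub hfDg' hgDf', qExpansion_smul hfDg, qExpansion_smul hgDf,
    qExpansion_mul hfa hDg, qExpansion_mul hga hDf]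
  simp only [map_sub, PowerSeries.coeff_smul, PowerSeries.coeff_one_mul,
    ← PowerSeries.coeff_zero_eq_constantCoeff_apply,
    qExpansion_normalizedDerivOfComplex_coeff hh hfper hf hfb,
    qExpansion_normalizedDerivOfComplex_coeff hh hgper hg hgb]
  push_cast
  simp only [smul_eq_mul]
  ring

end RankinCohen

section CuspForm

variable {Γ : Subgroup (GL (Fin 2) ℝ)} [Γ.HasDetOne] {k l : ℤ}

/-- The Rankin–Cohen bracket of two modular forms, as a cusp form. -/
noncomputable def rankinCohenCuspForm (f : ModularForm Γ k) (g : ModularForm Γ l) :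
    CuspForm Γ (k + l + 2) where
  toFun := rankinCohenBracket k l f g
  slash_action_eq' γ hγ := by
    have hdet : γ.val.det = 1 := congrArg Units.val (Subgroup.HasDetOne.det_eq hγ)
    rw [rankinCohenBracket_slash (ModularFormClass.holo f) (ModularFormClass.holo g)
      (hdet ▸ one_pos), hdet, SlashInvariantFormClass.slash_action_eq f γ hγ,
      SlashInvariantFormClass.slash_action_eq g γ hγ]
    simp
  holo' := mdifferentiable_rankinCohenBracket (ModularFormClass.holo f) (ModularFormClass.holo g)
  zero_at_cusps' {c} hc := by
    obtain ⟨γ, rfl⟩ := c.exists_mem_SL2 ℝ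
    rw [OnePoint.isZeroAt_iff rfl,
      rankinCohenBracket_slash (ModularFormClass.holo f) (ModularFormClass.holo g) (by simp)]
    exact (isZeroAtImInfty_rankinCohenBracket ((ModularFormClass.holo f).slash k _)
      ((ModularFormClass.holo g).slash l _) (f.bdd_at_cusps' hc _ rfl)
      (g.bdd_at_cusps' hc _ rfl)).smul _

end CuspForm

section LevelOne

lemma cuspForm_eq_coeff_one_smul_discriminant (f : CuspForm 𝒮ℒ 12) :
    ⇑f = (qExpansion 1 f).coeff 1 • discriminant := by
  obtain ⟨c, rfl⟩ := CuspForm.exists_smul_discriminant_of_weight_eq_twelve f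
  have hc : (qExpansion 1 (c • CuspForm.discriminant : ℍ → ℂ)).coeff 1 = c := by
    rw [ModularForm.qExpansion_smul one_pos one_mem_strictPeriods_SL, CuspForm.coe_discriminant]
    simp [discriminant_qExpansion_coeff_one]
  rw [FunLike.coe_smul, hc, CuspForm.coe_discriminant]

lemma rankinCohenBracket_E₄_E₆ :
    rankinCohenBracket 4 6 E₄ E₆ = (-3456 : ℂ) • discriminant := by
  have hcoeff : (qExpansion 1 (rankinCohenBracket 4 6 E₄ E₆)).coeff 1 = -3456 := by
    rw [qExpansion_rankinCohenBracket_coeff_one one_pos (ModularFormClass.holo E₄)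
      (ModularFormClass.holo E₆)
      (SlashInvariantFormClass.periodic_comp_ofComplex E₄ one_mem_strictPeriods_SL)
      (SlashInvariantFormClass.periodic_comp_ofComplex E₆ one_mem_strictPeriods_SL)
      (ModularFormClass.bdd_at_infty E₄) (ModularFormClass.bdd_at_infty E₆),
      EisensteinSeries.E_qExpansion_coeff_zero _ ⟨2, rfl⟩,
      EisensteinSeries.E_qExpansion_coeff_zero _ ⟨3, rfl⟩,
      E₄_qExpansion_coeff_one, E₆_qExpansion_coeff_one]
    norm_num
  rw [← hcoeff]
  exact cuspForm_eq_coeff_one_smul_discriminant (rankinCohenCuspForm E₄ E₆)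

lemma E_eq_one_sub_tsum_sigmaC {k : ℕ} (hk : 3 ≤ k) (hk2 : Even k) (z : ℍ) :
    E hk z = 1 - 2 * k / bernoulli k * ∑' n : ℕ, sigmaC (k - 1) (n + 1) * qexp z ^ (n + 1) := by
  rw [EisensteinSeries.q_expansion_bernoulli hk hk2,
    ← tsum_pnat_eq_tsum_succ (f := fun n ↦ sigmaC (k - 1) n * qexp z ^ n)]
  simp [sigmaC, qexp, ArithmeticFunction.sigma_apply]

lemma E4_eq_E₄ (z : ℍ) : E4 z = E₄ z := by
  rw [E_eq_one_sub_tsum_sigmaC _ ⟨2, rfl⟩, E4,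
    show bernoulli 4 = -1 / 30 by decide +kernel]
  norm_num

lemma E6_eq_E₆ (z : ℍ) : E6 z = E₆ z := by
  rw [E_eq_one_sub_tsum_sigmaC _ ⟨3, rfl⟩, E6,
    show bernoulli 6 = 1 / 42 by decide +kernel]
  norm_num

lemma two_mul_E4_mul_D_E₆_sub_three_mul_E6_mul_D_E₄ (z : ℍ) :
    2 * E4 z * D E₆ z - 3 * E6 z * D E₄ z = -(E4 z ^ 3 - E6 z ^ 2) := by
  have hRC := congrFun rankinCohenBracket_E₄_E₆ z
  simp only [rankinCohenBracket, Pi.sub_apply, Pi.smul_apply, Pi.mul_apply, smul_eq_mul,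
    discriminant_eq_E₄_cube_sub_E₆_sq, ← E4_eq_E₄, ← E6_eq_E₆] at hRC
  push_cast at hRC
  linear_combination hRC / 2

end LevelOne

lemma hasDerivAt_cube_div_cube_sub_sq {𝕜 : Type*} [NontriviallyNormedField 𝕜] {f g : 𝕜 → 𝕜}
    {f' g' x : 𝕜} (hf : HasDerivAt f f' x) (hg : HasDerivAt g g' x) (hne : f x ^ 3 - g x ^ 2 ≠ 0) :
    HasDerivAt (fun y ↦ f y ^ 3 / (f y ^ 3 - g y ^ 2))
      (f x ^ 2 * g x * (2 * f x * g' - 3 * g x * f') / (f x ^ 3 - g x ^ 2) ^ 2) x := by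
  convert! (hf.pow 3).div ((hf.pow 3).sub (hg.pow 2)) hne using 1
  simp only [Pi.pow_apply, Pi.sub_apply]
  push_cast
  ring

/-- The derivative of `J`: `(1/(2πi)) J' = -(1/1728) E₄² E₆ / Δ`. -/
theorem J_derivative (τ : ℂ) (hτ : 0 < τ.im) (hΔ : E4 τ ^ 3 ≠ E6 τ ^ 2) :
    HasDerivAt Jinv
      (2 * Real.pi * Complex.I * (-(1 / 1728) * E4 τ ^ 2 * E6 τ / Δfun τ)) τ := by
  have h4 := hasDerivAt_of_forall_coe_eq (ModularFormClass.holo E₄) E4_eq_E₄ ⟨τ, hτ⟩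
  have h6 := hasDerivAt_of_forall_coe_eq (ModularFormClass.holo E₆) E6_eq_E₆ ⟨τ, hτ⟩
  have hRC := two_mul_E4_mul_D_E₆_sub_three_mul_E6_mul_D_E₄ ⟨τ, hτ⟩
  have hne : E4 τ ^ 3 - E6 τ ^ 2 ≠ 0 := sub_ne_zero.mpr hΔ
  refine (hasDerivAt_cube_div_cube_sub_sq h4 h6 hne).congr_deriv ?_
  simp only [Δfun] at hRC ⊢
  field_simp
  linear_combination E4 τ ^ 2 * E6 τ * hRC
end
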